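/- arXiv:1110.2403 — 11 statements merged into one kernel-verified Lean document; each statement's English description precedes it below -/
import Mathlib

section
/- Let A, B, C ∈ ℝ and let f : ℝ → ℝ be three times continuously differentiable with (A + B·f + C·f²)·f′ + f‴ = 0 on ℝ. Suppose there is f₀ ≠ 0 such that f(ξ) → f₀ as ξ → +∞, f(ξ) → −f₀ as ξ → −∞, and f′(ξ) → 0, f″(ξ) → 0 as ξ → ±∞. Then necessarily B = 0 and 3·A = −C·f₀². -/
theorem const_limits (G : ℝ → ℝ) (hG : ∀ x, HasDerivAt G 0 x) (a b : ℝ)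
    (ha : Filter.Tendsto G Filter.atTop (nhds a))
    (hb : Filter.Tendsto G Filter.atBot (nhds b)) : G 0 = a ∧ G 0 = b := by
  have hc : G = fun _ => G 0 := by
    funext x
    exact is_const_of_deriv_eq_zero (fun x => (hG x).differentiableAt) (fun x => (hG x).deriv) x 0
  rw [hc] at ha hb
  exact ⟨tendsto_nhds_unique tendsto_const_nhds ha, tendsto_nhds_unique tendsto_const_nhds hb⟩

/-- If `f` is `C³` on `ℝ`, satisfies `(A + B·f + C·f²)·f′ + f‴ = 0`,
with kink boundary conditions `f → ±f₀ ≠ 0` as `ξ → ±∞` and `f′, f″ → 0` at `±∞`,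
then `B = 0` and `3A = −C·f₀²`. -/
theorem stmt4 (A B C : ℝ) (f : ℝ → ℝ) (hf : ContDiff ℝ 3 f)
    (hode : ∀ ξ : ℝ,
      (A + B * f ξ + C * (f ξ) ^ 2) * deriv f ξ + deriv (deriv (deriv f)) ξ = 0)
    (f₀ : ℝ) (hf₀ : f₀ ≠ 0)
    (htop : Filter.Tendsto f Filter.atTop (nhds f₀))
    (hbot : Filter.Tendsto f Filter.atBot (nhds (-f₀)))
    (h1top : Filter.Tendsto (deriv f) Filter.atTop (nhds 0))
    (h1bot : Filter.Tendsto (deriv f) Filter.atBot (nhds 0))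
    (h2top : Filter.Tendsto (deriv (deriv f)) Filter.atTop (nhds 0))
    (h2bot : Filter.Tendsto (deriv (deriv f)) Filter.atBot (nhds 0)) :
    B = 0 ∧ 3 * A = -C * f₀ ^ 2 := by
  have hd1 : ContDiff ℝ 2 (deriv f) :=
    ((contDiff_succ_iff_deriv (n := 2)).1 (by norm_num; exact hf)).2.2
  have hd2 : ContDiff ℝ 1 (deriv (deriv f)) :=
    ((contDiff_succ_iff_deriv (n := 1)).1 (by norm_num; exact hd1)).2.2
  have e0 : ∀ x, HasDerivAt f (deriv f x) x := fun x =>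
    (hf.differentiable (by norm_num) x).hasDerivAt
  have e1 : ∀ x, HasDerivAt (deriv f) (deriv (deriv f) x) x := fun x =>
    (hd1.differentiable (by norm_num) x).hasDerivAt
  have e2 : ∀ x, HasDerivAt (deriv (deriv f)) (deriv (deriv (deriv f)) x) x := fun x =>
    (hd2.differentiable (by norm_num) x).hasDerivAt
  let G : ℝ → ℝ := fun x => A * f x + B / 2 * f x ^ 2 + C / 3 * f x ^ 3 + deriv (deriv f) x
  have hG : ∀ x, HasDerivAt G 0 x := by
    intro x
    have h := ((((e0 x).const_mul A).add (((e0 x).pow 2).const_mul (B / 2))).add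
      (((e0 x).pow 3).const_mul (C / 3))).add (e2 x)
    refine h.congr_deriv ?_
    have := hode x
    push_cast
    simp only [Nat.reduceSub, pow_one]
    linear_combination this
  have lG : ∀ (l : Filter ℝ) (a : ℝ), Filter.Tendsto f l (nhds a) →
      Filter.Tendsto (deriv (deriv f)) l (nhds 0) →
      Filter.Tendsto G l (nhds (A * a + B / 2 * a ^ 2 + C / 3 * a ^ 3 + 0)) := by
    intro l a h h2
    exact (((h.const_mul A).add ((h.pow 2).const_mul (B / 2))).add
      ((h.pow 3).const_mul (C / 3))).add h2
  obtain ⟨g1, g2⟩ := const_limits G hG _ _ (lG _ _ htop h2top) (lG _ _ hbot h2bot)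
  have hK : ∀ x, G x = G 0 := fun x =>
    is_const_of_deriv_eq_zero (fun x => (hG x).differentiableAt) (fun x => (hG x).deriv) x 0
  generalize G 0 = K at g1 g2 hK
  let H : ℝ → ℝ := fun x => A / 2 * f x ^ 2 + B / 6 * f x ^ 3 + C / 12 * f x ^ 4
    + 1 / 2 * deriv f x ^ 2 + (-K) * f x
  have hH : ∀ x, HasDerivAt H 0 x := by
    intro x
    have h := ((((((e0 x).pow 2).const_mul (A / 2)).add (((e0 x).pow 3).const_mul (B / 6))).add
      (((e0 x).pow 4).const_mul (C / 12))).add (((e1 x).pow 2).const_mul (1 / 2))).add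
      ((e0 x).const_mul (-K))
    refine h.congr_deriv ?_
    have : A * f x + B / 2 * f x ^ 2 + C / 3 * f x ^ 3 + deriv (deriv f) x = K := hK x
    push_cast
    simp only [Nat.reduceSub, pow_one]
    linear_combination deriv f x * this
  have lH : ∀ (l : Filter ℝ) (a : ℝ), Filter.Tendsto f l (nhds a) →
      Filter.Tendsto (deriv f) l (nhds 0) →
      Filter.Tendsto H l (nhds (A / 2 * a ^ 2 + B / 6 * a ^ 3 + C / 12 * a ^ 4
        + 1 / 2 * 0 ^ 2 + (-K) * a)) := by
    intro l a h h1
    exact (((((h.pow 2).const_mul (A / 2)).add ((h.pow 3).const_mul (B / 6))).add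
      ((h.pow 4).const_mul (C / 12))).add ((h1.pow 2).const_mul (1 / 2))).add (h.const_mul (-K))
  obtain ⟨k1, k2⟩ := const_limits H hH _ _ (lH _ _ htop h1top) (lH _ _ hbot h1bot)
  constructor
  · have : B * f₀ ^ 3 = 0 := by
      linear_combination 3 / 2 * (k1 - k2) - 3 / 2 * f₀ * (g1 + g2)
    exact (mul_eq_zero.1 this).resolve_right (pow_ne_zero 3 hf₀)
  · have : f₀ * (3 * A + C * f₀ ^ 2) = 0 := by
      linear_combination 3 / 2 * (g2 - g1)
    have := (mul_eq_zero.1 this).resolve_left hf₀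
    linear_combination this
end

section
/- Let α > 0 be real, β = 0, c > 0, and let Θ ∈ ℝ, θ ∈ [0, 2π), φ ∈ [0, 2π). Then the function u(t,x) = e^{iφ}·√(c/α)·( e^{iθ}·tanh Θ + 6·sech Θ / ( 2·cos θ·sinh Θ + √(6 + 4·cos²θ·sinh²Θ)·cosh(√c·(x − c·t)·sech Θ) ) ) is smooth on ℝ×ℝ (the denominator never vanishes) and satisfies the complex mKdV equation u_t + α·conj(u)·u·u_x + u_xxx = 0 at every point (t,x) ∈ ℝ×ℝ. -/
/-- Left-hand side of the complex mKdV equation (γ = 1):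
`u_t + α·conj(u)·u·u_x + β·u²·conj(u)_x + u_xxx`. -/
noncomputable def mkdvLHS (α β : ℂ) (u : ℝ → ℝ → ℂ) (t x : ℝ) : ℂ :=
  deriv (fun s => u s x) t
    + α * (starRingEnd ℂ) (u t x) * u t x * deriv (u t) x
    + β * (u t x) ^ 2 * deriv (fun y => (starRingEnd ℂ) (u t y)) x
    + deriv (deriv (deriv (u t))) x

/-- Hyperbolic secant. -/
noncomputable def sech (x : ℝ) : ℝ := 1 / Real.cosh x

/-- The profile `6S/(a + B cosh(kξ))` solves a second order ODE. -/
theorem profile_ode (a B k S : ℝ) (hD : ∀ y, a + B * Real.cosh (k * y) ≠ 0) (hS : S ≠ 0)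
    (hB : B ^ 2 = a ^ 2 + 6) :
    ∃ f g : ℝ → ℝ, (∀ y, f y = 6 * S / (a + B * Real.cosh (k * y))) ∧
      (∀ y, HasDerivAt f (g y) y) ∧
      (∀ y, HasDerivAt g (k ^ 2 * f y - k ^ 2 / S ^ 2 * (a * S / 2) * f y ^ 2
        - k ^ 2 / S ^ 2 / 3 * f y ^ 3) y) := by
  have hk : ∀ y : ℝ, HasDerivAt (fun y => k * y) k y := fun y => by
    simpa using (hasDerivAt_id y).const_mul k
  have h1 : ∀ y, HasDerivAt (fun y => a + B * Real.cosh (k * y))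
      (B * (Real.sinh (k * y) * k)) y := fun y =>
    (((hk y).cosh).const_mul B).const_add a
  have h2 : ∀ y, HasDerivAt (fun y => B * (Real.sinh (k * y) * k))
      (B * (Real.cosh (k * y) * k * k)) y := fun y =>
    (((hk y).sinh).mul_const k).const_mul B
  refine ⟨fun y => 6 * S / (a + B * Real.cosh (k * y)),
    fun y => -(6 * S * (B * (Real.sinh (k * y) * k))) / (a + B * Real.cosh (k * y)) ^ 2,
    fun y => rfl, fun y => ?_, fun y => ?_⟩
  · have := (hasDerivAt_const y (6 * S)).div (h1 y) (hD y)
    refine this.congr_deriv ?_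
    ring
  · have := (((h2 y).const_mul (6 * S)).neg).div ((h1 y).pow 2) (pow_ne_zero 2 (hD y))
    refine this.congr_deriv ?_
    simp only [Pi.pow_apply, Pi.neg_apply]
    clear this
    have hd := hD y
    have hs := Real.cosh_sq (k * y)
    generalize Real.cosh (k * y) = C at *
    generalize Real.sinh (k * y) = s at *
    have hsinh : s ^ 2 = C ^ 2 - 1 := by linarith
    push_cast
    field_simp
    linear_combination (-12) * k ^ 2 * hB + 12 * k ^ 2 * B ^ 2 * hsinh

/-- the complex solitary wave (solitary1) for `Im α = 0`, `β = 0`. -/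
theorem stmt5 (α : ℝ) (hα : 0 < α) (c : ℝ) (hc : 0 < c)
    (Θ θ φ : ℝ) (hθ : θ ∈ Set.Ico 0 (2 * Real.pi)) (hφ : φ ∈ Set.Ico 0 (2 * Real.pi))
    (u : ℝ → ℝ → ℂ)
    (hu : ∀ t x : ℝ, u t x =
      Complex.exp ((φ : ℂ) * Complex.I) * ((Real.sqrt (c / α) : ℝ) : ℂ) *
        (Complex.exp ((θ : ℂ) * Complex.I) * ((Real.tanh Θ : ℝ) : ℂ)
          + ((6 * sech Θ /
              (2 * Real.cos θ * Real.sinh Θ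
                + Real.sqrt (6 + 4 * (Real.cos θ) ^ 2 * (Real.sinh Θ) ^ 2)
                  * Real.cosh (Real.sqrt c * (x - c * t) * sech Θ)) : ℝ) : ℂ))) :
    (∀ t x : ℝ,
        2 * Real.cos θ * Real.sinh Θ
          + Real.sqrt (6 + 4 * (Real.cos θ) ^ 2 * (Real.sinh Θ) ^ 2)
            * Real.cosh (Real.sqrt c * (x - c * t) * sech Θ) ≠ 0)
      ∧ ContDiff ℝ (⊤ : ℕ∞) (Function.uncurry u)
      ∧ ∀ t x : ℝ, mkdvLHS (α : ℂ) 0 u t x = 0 := by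
  have hch : 0 < Real.cosh Θ := Real.cosh_pos Θ
  have hSpos : 0 < sech Θ := by unfold sech; positivity
  have hT : Real.tanh Θ = Real.sinh Θ * sech Θ := by
    rw [Real.tanh_eq_sinh_div_cosh, sech]; ring
  have hST : sech Θ ^ 2 = 1 - Real.tanh Θ ^ 2 := by
    rw [Real.tanh_eq_sinh_div_cosh, sech]
    have := Real.cosh_sq Θ
    field_simp
    linarith
  have hB0 : 0 ≤ 6 + 4 * (Real.cos θ) ^ 2 * (Real.sinh Θ) ^ 2 := by positivity
  have hB2 := Real.sq_sqrt hB0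
  have hBn := Real.sqrt_nonneg (6 + 4 * (Real.cos θ) ^ 2 * (Real.sinh Θ) ^ 2)
  generalize Real.sqrt (6 + 4 * (Real.cos θ) ^ 2 * (Real.sinh Θ) ^ 2) = B at *
  have hpos : ∀ z : ℝ, 0 < 2 * Real.cos θ * Real.sinh Θ + B * Real.cosh z := by
    intro z
    have h1 := Real.one_le_cosh z
    have h2 : |2 * Real.cos θ * Real.sinh Θ| < B := by
      apply abs_lt_of_sq_lt_sq _ hBn
      nlinarith
    have h3 := neg_abs_le (2 * Real.cos θ * Real.sinh Θ)
    nlinarith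
  refine ⟨fun t x => (hpos _).ne', ?_, ?_⟩
  · have : Function.uncurry u = fun p : ℝ × ℝ => Complex.exp ((φ : ℂ) * Complex.I) *
        ((Real.sqrt (c / α) : ℝ) : ℂ) *
        (Complex.exp ((θ : ℂ) * Complex.I) * ((Real.tanh Θ : ℝ) : ℂ)
          + Complex.ofRealCLM (6 * sech Θ /
              (2 * Real.cos θ * Real.sinh Θ
                + B * Real.cosh (Real.sqrt c * (p.2 - c * p.1) * sech Θ)))) := by
      funext p
      exact hu p.1 p.2
    rw [this]
    refine contDiff_const.mul (contDiff_const.add (Complex.ofRealCLM.contDiff.comp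
      (contDiff_const.div (contDiff_const.add (contDiff_const.mul
        (Real.contDiff_cosh.comp ?_))) fun p => (hpos _).ne')))
    fun_prop
  · obtain ⟨f, g, hf, hfg, hg⟩ := profile_ode (2 * Real.cos θ * Real.sinh Θ) B
      (Real.sqrt c * sech Θ) (sech Θ) (fun y => (hpos _).ne') hSpos.ne' (by rw [hB2]; ring)
    set K : ℂ := Complex.exp ((φ : ℂ) * Complex.I) * ((Real.sqrt (c / α) : ℝ) : ℂ) with hK
    set E : ℂ := Complex.exp ((θ : ℂ) * Complex.I) * ((Real.tanh Θ : ℝ) : ℂ) with hE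
    have hu' : ∀ t x, u t x = K * (E + (f (x - c * t) : ℝ)) := by
      intro t x
      rw [hu, hf]
      congr 6
      ring_nf
    have hkc : (Real.sqrt c * sech Θ) ^ 2 = c * sech Θ ^ 2 := by
      rw [mul_pow, Real.sq_sqrt hc.le]
    have hg' : ∀ y, HasDerivAt g (c * sech Θ ^ 2 * f y
        - c * (Real.cos θ * Real.tanh Θ) * f y ^ 2 - c / 3 * f y ^ 3) y := by
      intro y
      convert hg y using 1
      rw [hkc, hT]
      field_simp
    have hp' : ∀ y, HasDerivAt (fun y => c * sech Θ ^ 2 * f y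
        - c * (Real.cos θ * Real.tanh Θ) * f y ^ 2 - c / 3 * f y ^ 3)
        ((c * sech Θ ^ 2 - 2 * c * (Real.cos θ * Real.tanh Θ) * f y - c * f y ^ 2) * g y) y := by
      intro y
      refine ((((hfg y).const_mul (c * sech Θ ^ 2)).sub (((hfg y).pow 2).const_mul
        (c * (Real.cos θ * Real.tanh Θ)))).sub (((hfg y).pow 3).const_mul (c / 3))).congr_deriv ?_
      push_cast
      ring
    have key : ∀ (F G : ℝ → ℝ), (∀ y, HasDerivAt F (G y) y) → ∀ t x : ℝ,
        HasDerivAt (fun x : ℝ => ((F (x - c * t) : ℝ) : ℂ)) ((G (x - c * t) : ℝ) : ℂ) x := by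
      intro F G h t x
      have h1 : HasDerivAt (fun x : ℝ => x - c * t) 1 x := (hasDerivAt_id x).sub_const _
      have h2 := (h (x - c * t)).comp x h1
      simpa using h2.ofReal_comp
    intro t x
    have d1 : deriv (u t) = fun x => K * ((g (x - c * t) : ℝ) : ℂ) := by
      funext x
      have : u t = fun x => K * (E + (f (x - c * t) : ℝ)) := funext (hu' t)
      rw [this]
      exact (((key f g hfg t x).const_add E).const_mul K).deriv
    have d2 := fun x => ((key g _ hg' t x).const_mul K).deriv
    have d3 := fun x => ((key _ _ hp' t x).const_mul K).deriv
    have dt : deriv (fun s => u s x) t = K * ((g (x - c * t) * (-c) : ℝ) : ℂ) := by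
      have : (fun s => u s x) = fun s => K * (E + (f (x - c * s) : ℝ)) :=
        funext fun s => hu' s x
      rw [this]
      have h1 : HasDerivAt (fun s : ℝ => x - c * s) (-c) t := by
        simpa using ((hasDerivAt_id t).const_mul c).const_sub x
      have h2 := ((hfg (x - c * t)).comp t h1).ofReal_comp
      exact ((h2.const_add E).const_mul K).deriv
    have hmod : (α : ℂ) * (starRingEnd ℂ) (u t x) * u t x = ((c * (Real.tanh Θ ^ 2
        + 2 * Real.cos θ * Real.tanh Θ * f (x - c * t) + f (x - c * t) ^ 2) : ℝ) : ℂ) := by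
      have h1 : (α : ℂ) * (starRingEnd ℂ) (u t x) * u t x
          = ((α * Complex.normSq (u t x) : ℝ) : ℂ) := by
        rw [Complex.ofReal_mul, ← Complex.mul_conj]; ring
      rw [h1, hu']
      congr 1
      have h2 : Complex.normSq K = c / α := by
        rw [hK, Complex.normSq_mul, Complex.normSq_ofReal, Complex.normSq_eq_norm_sq,
          Complex.norm_exp_ofReal_mul_I, Real.mul_self_sqrt (by positivity)]
        ring
      rw [Complex.normSq_mul, h2, hE, Complex.normSq_apply]
      have e1 := Complex.exp_ofReal_mul_I_re θ
      have e2 := Complex.exp_ofReal_mul_I_im θ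
      simp only [Complex.add_re, Complex.add_im, Complex.re_mul_ofReal, Complex.im_mul_ofReal,
        Complex.ofReal_re, Complex.ofReal_im, e1, e2]
      have := Real.sin_sq_add_cos_sq θ
      field_simp
      linear_combination (Real.tanh Θ ^ 2) * this
    have d2' := funext d2
    unfold mkdvLHS
    rw [dt, hmod, d1, d2', d3, hST]
    push_cast
    ring
end

section
/- Let α > 0 be real, β = 0, c > 0, and let θ ∈ [0, 2π), φ ∈ [0, 2π). Then the function u(t,x) = e^{iφ}·√(c/α)·( e^{iθ} − 12·cos θ / (3 + 2·c·(x − c·t)²·cos²θ) ) is smooth on ℝ×ℝ and satisfies the complex mKdV equation u_t + α·conj(u)·u·u_x + u_xxx = 0 at every point (t,x) ∈ ℝ×ℝ. -/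
lemma aux1 (N a b y : ℝ) (ha : 0 ≤ a) :
    HasDerivAt (fun y : ℝ => N / (3 + a * (y - b) ^ 2))
      (-2 * a * N * (y - b) / (3 + a * (y - b) ^ 2) ^ 2) y := by
  have hD : 3 + a * (y - b) ^ 2 ≠ 0 := by positivity
  have h1 : HasDerivAt (fun y : ℝ => 3 + a * (y - b) ^ 2) (2 * a * (y - b)) y := by
    have := ((((hasDerivAt_id y).sub_const b).pow 2).const_mul a).const_add 3
    refine HasDerivAt.congr_deriv (this) ?_
    simp; ring
  refine HasDerivAt.congr_deriv ((hasDerivAt_const y N).div h1 hD) ?_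
  ring

lemma aux2 (N a b y : ℝ) (ha : 0 ≤ a) :
    HasDerivAt (fun y : ℝ => -2 * a * N * (y - b) / (3 + a * (y - b) ^ 2) ^ 2)
      (N * (6 * a * (3 + a * (y - b) ^ 2) - 24 * a) / (3 + a * (y - b) ^ 2) ^ 3) y := by
  have hD : 3 + a * (y - b) ^ 2 ≠ 0 := by positivity
  have h1 : HasDerivAt (fun y : ℝ => 3 + a * (y - b) ^ 2) (2 * a * (y - b)) y := by
    have := ((((hasDerivAt_id y).sub_const b).pow 2).const_mul a).const_add 3
    refine HasDerivAt.congr_deriv (this) ?_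
    simp; ring
  have h2 : HasDerivAt (fun y : ℝ => -2 * a * N * (y - b)) (-2 * a * N) y := by
    simpa using ((hasDerivAt_id y).sub_const b).const_mul (-2 * a * N)
  refine HasDerivAt.congr_deriv (h2.div (h1.pow 2) (pow_ne_zero 2 hD)) ?_
  field_simp
  push_cast
  ring

lemma aux3 (N a b y : ℝ) (ha : 0 ≤ a) :
    HasDerivAt (fun y : ℝ =>
        N * (6 * a * (3 + a * (y - b) ^ 2) - 24 * a) / (3 + a * (y - b) ^ 2) ^ 3)
      (N * a ^ 2 * (y - b) * (144 - 24 * (3 + a * (y - b) ^ 2)) / (3 + a * (y - b) ^ 2) ^ 4) y := by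
  have hD : 3 + a * (y - b) ^ 2 ≠ 0 := by positivity
  have h1 : HasDerivAt (fun y : ℝ => 3 + a * (y - b) ^ 2) (2 * a * (y - b)) y := by
    have := ((((hasDerivAt_id y).sub_const b).pow 2).const_mul a).const_add 3
    refine HasDerivAt.congr_deriv (this) ?_
    simp; ring
  have h2 := ((h1.const_mul (6 * a)).sub_const (24 * a)).const_mul N
  refine HasDerivAt.congr_deriv (h2.div (h1.pow 3) (pow_ne_zero 3 hD)) ?_
  field_simp
  push_cast
  ring

lemma aux4 (K E : ℂ) (f : ℝ → ℝ) (f' y : ℝ) (h : HasDerivAt f f' y) :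
    HasDerivAt (fun y : ℝ => K * (E - ((f y : ℝ) : ℂ))) (-K * (f' : ℂ)) y := by
  refine HasDerivAt.congr_deriv ((h.ofReal_comp.const_sub E).const_mul K) ?_
  ring

lemma aux5 (K : ℂ) (f : ℝ → ℝ) (f' y : ℝ) (h : HasDerivAt f f' y) :
    HasDerivAt (fun y : ℝ => K * ((f y : ℝ) : ℂ)) (K * (f' : ℂ)) y :=
  h.ofReal_comp.const_mul K

/-- the complex rational solitary wave (solitary2) for `Im α = 0`, `β = 0`. -/
theorem stmt6 (α : ℝ) (hα : 0 < α) (c : ℝ) (hc : 0 < c)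
    (θ φ : ℝ) (hθ : θ ∈ Set.Ico 0 (2 * Real.pi)) (hφ : φ ∈ Set.Ico 0 (2 * Real.pi))
    (u : ℝ → ℝ → ℂ)
    (hu : ∀ t x : ℝ, u t x =
      Complex.exp ((φ : ℂ) * Complex.I) * ((Real.sqrt (c / α) : ℝ) : ℂ) *
        (Complex.exp ((θ : ℂ) * Complex.I)
          - ((12 * Real.cos θ /
              (3 + 2 * c * (x - c * t) ^ 2 * (Real.cos θ) ^ 2) : ℝ) : ℂ))) :
    ContDiff ℝ (⊤ : ℕ∞) (Function.uncurry u)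
      ∧ ∀ t x : ℝ, mkdvLHS (α : ℂ) 0 u t x = 0 := by
  have ha : 0 ≤ 2 * c * Real.cos θ ^ 2 := by positivity
  set K : ℂ := Complex.exp ((φ : ℂ) * Complex.I) * ((Real.sqrt (c / α) : ℝ) : ℂ) with hK
  set E : ℂ := Complex.exp ((θ : ℂ) * Complex.I) with hE
  set C : ℝ := Real.cos θ with hC
  have hKK : (α : ℂ) * ((starRingEnd ℂ) K * K) = c := by
    rw [← Complex.normSq_eq_conj_mul_self, hK, Complex.normSq_mul, Complex.normSq_ofReal,
      Real.mul_self_sqrt (by positivity), Complex.normSq_eq_norm_sq, Complex.norm_exp_ofReal_mul_I]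
    push_cast
    have : (α : ℂ) ≠ 0 := by exact_mod_cast hα.ne'
    field_simp
  have hEE : (starRingEnd ℂ) E * E = 1 := by
    rw [← Complex.normSq_eq_conj_mul_self, Complex.normSq_eq_norm_sq, hE,
      Complex.norm_exp_ofReal_mul_I]
    simp
  have hE2 : (starRingEnd ℂ) E + E = 2 * C := by
    rw [add_comm, Complex.add_conj, hE, Complex.exp_ofReal_mul_I_re]
    push_cast; rw [hC, Complex.ofReal_cos]
  have hu' : ∀ t x : ℝ, u t x = K * (E - ((12 * C / (3 + (2 * c * C ^ 2) * (x - c * t) ^ 2) : ℝ) : ℂ)) := by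
    intro t x
    rw [hu, mul_right_comm (2 * c)]
  clear_value K E C
  clear hu
  obtain ⟨a, haa⟩ : ∃ a, a = 2 * c * C ^ 2 := ⟨_, rfl⟩
  rw [← haa] at ha hu'
  constructor
  · have : Function.uncurry u = fun p : ℝ × ℝ =>
        K * (E - Complex.ofRealCLM (12 * C / (3 + a * (p.2 - c * p.1) ^ 2))) := by
      ext ⟨t, x⟩
      simp only [Function.uncurry, hu', Complex.ofRealCLM_apply]
    rw [this]
    refine contDiff_const.mul (contDiff_const.sub (Complex.ofRealCLM.contDiff.comp ?_))
    refine contDiff_const.div (by fun_prop) ?_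
    intro p
    positivity
  · intro t x
    have hD : 3 + a * (x - c * t) ^ 2 ≠ 0 := by positivity
    have hut : u t = fun x : ℝ => K * (E - ((12 * C / (3 + a * (x - c * t) ^ 2) : ℝ) : ℂ)) :=
      funext (hu' t)
    have d1 : deriv (u t) = fun y : ℝ =>
        -K * ((-2 * a * (12 * C) * (y - c * t) / (3 + a * (y - c * t) ^ 2) ^ 2 : ℝ) : ℂ) := by
      rw [hut]
      exact funext fun y => (aux4 K E _ _ y (aux1 (12 * C) a (c * t) y ha)).deriv
    have d2 : deriv (deriv (u t)) = fun y : ℝ =>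
        -K * ((12 * C * (6 * a * (3 + a * (y - c * t) ^ 2) - 24 * a) / (3 + a * (y - c * t) ^ 2) ^ 3 : ℝ) : ℂ) := by
      rw [d1]
      exact funext fun y => (aux5 (-K) _ _ y (aux2 (12 * C) a (c * t) y ha)).deriv
    have d3 : deriv (deriv (deriv (u t))) x =
        -K * ((12 * C * a ^ 2 * (x - c * t) * (144 - 24 * (3 + a * (x - c * t) ^ 2)) / (3 + a * (x - c * t) ^ 2) ^ 4 : ℝ) : ℂ) := by
      rw [d2]
      exact (aux5 (-K) _ _ x (aux3 (12 * C) a (c * t) x ha)).deriv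
    have dt : deriv (fun s => u s x) t =
        -K * ((-2 * a * (12 * C) * (x - c * t) / (3 + a * (x - c * t) ^ 2) ^ 2 * (-c) : ℝ) : ℂ) := by
      have hs : (fun s => u s x) = fun s : ℝ =>
          K * (E - ((12 * C / (3 + a * (x - c * s) ^ 2) : ℝ) : ℂ)) := funext fun s => hu' s x
      rw [hs]
      have hl : HasDerivAt (fun s : ℝ => (x - c * s)) (-c) t := by
        simpa using ((hasDerivAt_id t).const_mul c).const_sub x
      have h0 := (aux1 (12 * C) a 0 (x - c * t) ha).comp t hl
      simp only [sub_zero, Function.comp_def] at h0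
      exact (aux4 K E _ _ t h0).deriv
    unfold mkdvLHS
    rw [dt, d3, d1, hu']
    obtain ⟨w, hw⟩ : ∃ w, w = 12 * C / (3 + a * (x - c * t) ^ 2) := ⟨_, rfl⟩
    obtain ⟨w1, hw1⟩ : ∃ w1, w1 = -2 * a * (12 * C) * (x - c * t) / (3 + a * (x - c * t) ^ 2) ^ 2 := ⟨_, rfl⟩
    obtain ⟨w3, hw3⟩ : ∃ w3, w3 = 12 * C * a ^ 2 * (x - c * t) * (144 - 24 * (3 + a * (x - c * t) ^ 2)) / (3 + a * (x - c * t) ^ 2) ^ 4 := ⟨_, rfl⟩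
    have key : w3 = c * (2 * C * w - w ^ 2) * w1 := by
      rw [hw, hw1, hw3]
      generalize 3 + a * (x - c * t) ^ 2 = D at hD
      subst haa
      field_simp
      ring
    have keyC : (w3 : ℂ) = c * (2 * C * w - w ^ 2) * w1 := by exact_mod_cast key
    beta_reduce
    rw [← hw, ← hw1, ← hw3]
    rw [keyC]
    simp only [map_mul, map_sub, Complex.conj_ofReal]
    push_cast
    linear_combination (-K * w1 * ((starRingEnd ℂ) E - w) * (E - w)) * hKK
      - K * w1 * c * hEE + K * w1 * c * w * hE2
end

section
/- Let α, β ∈ ℂ with Im(α + β) = 0 and Re(α + β) > 0, let c > 0, and let Θ ∈ ℝ, φ ∈ [0, 2π). Then the function u(t,x) = e^{iφ}·√(c/(α+β))·( tanh Θ + 6·sech Θ / ( 2·sinh Θ + √(6 + 4·sinh²Θ)·cosh(√c·(x − c·t)·sech Θ) ) ) is smooth on ℝ×ℝ (the denominator never vanishes) and satisfies the complex mKdV equation u_t + α·conj(u)·u·u_x + β·u²·conj(u)_x + u_xxx = 0 at every point (t,x) ∈ ℝ×ℝ. In particular, for Θ = 0 this is the solitary wave u(t,x) = e^{iφ}·√(6c/(α+β))·sech(√c·(x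 − c·t)). -/
lemma den_pos_aux (a y : ℝ) : 0 < 2 * a + Real.sqrt (6 + 4 * a ^ 2) * Real.cosh y := by
  have h1 : |2 * a| < Real.sqrt (6 + 4 * a ^ 2) := by
    apply Real.lt_sqrt_of_sq_lt
    rw [sq_abs]; nlinarith
  have h2 := Real.one_le_cosh y
  have h3 := neg_abs_le (2 * a)
  have h4 := Real.sqrt_nonneg (6 + 4 * a ^ 2)
  nlinarith

/-- Profile ODE for the real soliton: existence of the three derivatives. -/
lemma profile_aux (c Θ : ℝ) (hc : 0 < c) (F : ℝ → ℝ)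
    (hF : ∀ z, F z = Real.tanh Θ + 6 * sech Θ / (2 * Real.sinh Θ
      + Real.sqrt (6 + 4 * (Real.sinh Θ) ^ 2) * Real.cosh (Real.sqrt c * z * sech Θ))) :
    ∃ F1 F2 : ℝ → ℝ, (∀ z, HasDerivAt F (F1 z) z) ∧ (∀ z, HasDerivAt F1 (F2 z) z) ∧
      (∀ z, HasDerivAt F2 (c * (1 - F z ^ 2) * F1 z) z) := by
  obtain ⟨R, hR⟩ : ∃ R, R = Real.sqrt (6 + 4 * (Real.sinh Θ) ^ 2) := ⟨_, rfl⟩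
  have hR2 : R ^ 2 = 6 + 4 * (Real.sinh Θ) ^ 2 := by
    rw [hR]; exact Real.sq_sqrt (by positivity)
  obtain ⟨q, hq⟩ : ∃ q, q = Real.sqrt c := ⟨_, rfl⟩
  have hq2 : q ^ 2 = c := by rw [hq]; exact Real.sq_sqrt hc.le
  have hDpos : ∀ z, 0 < 2 * Real.sinh Θ + R * Real.cosh (q * z * sech Θ) := by
    intro z; rw [hR]; exact den_pos_aux _ _
  rw [← hR, ← hq] at hF
  have hC := Real.cosh_pos Θ
  have hT : Real.tanh Θ = Real.sinh Θ * sech Θ := by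
    rw [Real.tanh_eq_sinh_div_cosh, sech]; ring
  have hS : sech Θ ^ 2 * (1 + Real.sinh Θ ^ 2) = 1 := by
    rw [sech, ← Real.cosh_sq']; field_simp
  rw [hT] at hF
  generalize Real.sinh Θ = a at *
  generalize sech Θ = S at *
  have hlin : ∀ z, HasDerivAt (fun z : ℝ => q * z * S) (q * S) z := by
    intro z
    simpa using ((hasDerivAt_id z).const_mul q).mul_const S
  have hD : ∀ z, HasDerivAt (fun z => 2 * a + R * Real.cosh (q * z * S))
      (R * (Real.sinh (q * z * S) * (q * S))) z := fun z =>
    (((hlin z).cosh).const_mul R).const_add (2 * a)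
  have hD1 : ∀ z, HasDerivAt (fun z => R * (Real.sinh (q * z * S) * (q * S)))
      (R * (Real.cosh (q * z * S) * (q * S) * (q * S))) z := fun z =>
    (((hlin z).sinh).mul_const (q * S)).const_mul R
  have hFf : F = fun z => a * S + 6 * S / (2 * a + R * Real.cosh (q * z * S)) := funext hF
  let F1 : ℝ → ℝ := fun z => -(6 * S) * (R * (Real.sinh (q * z * S) * (q * S))) /
      (2 * a + R * Real.cosh (q * z * S)) ^ 2
  have h1 : ∀ z, HasDerivAt F (F1 z) z := by
    intro z
    rw [hFf]
    have := ((hasDerivAt_const z (6 * S)).div (hD z) (hDpos z).ne').const_add (a * S)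
    refine this.congr_deriv ?_
    simp only [F1]; ring
  refine ⟨F1, fun z => c * S ^ 2 * (F z - a * S) - c * (a * S) * (F z - a * S) ^ 2
    - c * (F z - a * S) ^ 3 / 3, h1, ?_, ?_⟩
  · intro z
    have := ((hD1 z).const_mul (-(6 * S))).div ((hD z).pow 2) (pow_pos (hDpos z) 2).ne'
    refine this.congr_deriv ?_
    have hd := (hDpos z).ne'
    have hsq := Real.cosh_sq (q * z * S)
    simp only [hF, Pi.pow_apply]
    generalize Real.cosh (q * z * S) = C at *
    generalize Real.sinh (q * z * S) = s at *
    obtain ⟨D, hDd⟩ : ∃ D, D = 2 * a + R * C := ⟨_, rfl⟩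
    rw [← hDd] at hd ⊢
    subst hq2
    have hRs : R ^ 2 * s ^ 2 = (D - 2 * a) ^ 2 - 6 - 4 * a ^ 2 := by
      rw [hDd]; linear_combination (-1 : ℝ) * hR2 - R ^ 2 * hsq
    have hRC : R * C = D - 2 * a := by rw [hDd]; ring
    trans (-(6 * S) * (q * S) ^ 2 * (R * C) * D ^ 2
        + 12 * S * (q * S) ^ 2 * D * (R ^ 2 * s ^ 2)) / D ^ 4
    · norm_num; ring
    rw [hRs, hRC]
    field_simp
    ring
  · intro z
    have hw := (h1 z).sub_const (a * S)
    have := ((hw.const_mul (c * S ^ 2)).sub ((hw.pow 2).const_mul (c * (a * S)))).sub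
      (((hw.pow 3).const_mul c).div_const 3)
    refine this.congr_deriv ?_
    norm_num
    linear_combination (c * F1 z) * hS

/-- the complex solitary wave (solitary3) for `Im(α+β) = 0`, `Re(α+β) > 0`;
for `Θ = 0` it reduces to the sech solitary wave. -/
theorem stmt7 (α β : ℂ) (him : (α + β).im = 0) (hre : 0 < (α + β).re)
    (c : ℝ) (hc : 0 < c)
    (Θ φ : ℝ) (hφ : φ ∈ Set.Ico 0 (2 * Real.pi))
    (u : ℝ → ℝ → ℂ)
    (hu : ∀ t x : ℝ, u t x =
      Complex.exp ((φ : ℂ) * Complex.I) * ((Real.sqrt (c / (α + β).re) : ℝ) : ℂ) *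
        (((Real.tanh Θ
          + 6 * sech Θ /
            (2 * Real.sinh Θ
              + Real.sqrt (6 + 4 * (Real.sinh Θ) ^ 2)
                * Real.cosh (Real.sqrt c * (x - c * t) * sech Θ)) : ℝ) : ℂ))) :
    (∀ t x : ℝ,
        2 * Real.sinh Θ
          + Real.sqrt (6 + 4 * (Real.sinh Θ) ^ 2)
            * Real.cosh (Real.sqrt c * (x - c * t) * sech Θ) ≠ 0)
      ∧ ContDiff ℝ (⊤ : ℕ∞) (Function.uncurry u)
      ∧ (∀ t x : ℝ, mkdvLHS α β u t x = 0)
      ∧ (Θ = 0 → ∀ t x : ℝ, u t x =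
          Complex.exp ((φ : ℂ) * Complex.I)
            * ((Real.sqrt (6 * c / (α + β).re)
                * sech (Real.sqrt c * (x - c * t)) : ℝ) : ℂ)) := by
  have hc' := hc
  let F : ℝ → ℝ := fun z => Real.tanh Θ + 6 * sech Θ / (2 * Real.sinh Θ
      + Real.sqrt (6 + 4 * (Real.sinh Θ) ^ 2) * Real.cosh (Real.sqrt c * z * sech Θ))
  obtain ⟨F1, F2, h1, h2, h3⟩ := profile_aux c Θ hc F (fun _ => rfl)
  obtain ⟨A, hA⟩ : ∃ A, A = Complex.exp ((φ : ℂ) * Complex.I) *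
    ((Real.sqrt (c / (α + β).re) : ℝ) : ℂ) := ⟨_, rfl⟩
  have hu' : ∀ t x, u t x = A * (F (x - c * t) : ℂ) := by
    intro t x; rw [hu, hA]
  refine ⟨fun t x => (den_pos_aux _ _).ne', ?_, ?_, ?_⟩
  · have : Function.uncurry u = fun p : ℝ × ℝ => A * (F (p.2 - c * p.1) : ℂ) := by
      funext p; exact hu' p.1 p.2
    rw [this]
    have hFs : ContDiff ℝ (⊤ : ℕ∞) F := by
      refine contDiff_const.add (contDiff_const.div ?_ (fun z => (den_pos_aux _ _).ne'))
      fun_prop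
    have : ContDiff ℝ (⊤ : ℕ∞) (fun p : ℝ × ℝ => F (p.2 - c * p.1)) :=
      hFs.comp (by fun_prop)
    exact contDiff_const.mul (Complex.ofRealCLM.contDiff.comp this)
  · intro t x
    have hs : ∀ (G G' : ℝ → ℝ), (∀ z, HasDerivAt G (G' z) z) → ∀ (B : ℂ) (y : ℝ),
        HasDerivAt (fun y : ℝ => B * (G (y - c * t) : ℂ)) (B * (G' (y - c * t) : ℂ)) y := by
      intro G G' h B y
      have h0 : HasDerivAt (fun y : ℝ => G (y - c * t)) (G' (y - c * t)) y :=
        (h (y - c * t)).comp_sub_const y (c * t)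
      exact h0.ofReal_comp.const_mul B
    have e0 : u t = fun y => A * (F (y - c * t) : ℂ) := funext (hu' t)
    have e1 : deriv (u t) = fun y => A * (F1 (y - c * t) : ℂ) := by
      rw [e0]; funext y; exact (hs _ _ h1 A y).deriv
    have e2 : deriv (deriv (u t)) = fun y => A * (F2 (y - c * t) : ℂ) := by
      rw [e1]; funext y; exact (hs _ _ h2 A y).deriv
    have e3 : deriv (deriv (deriv (u t))) x =
        A * ((c * (1 - F (x - c * t) ^ 2) * F1 (x - c * t) : ℝ) : ℂ) := by
      rw [e2]; exact (hs F2 (fun z => c * (1 - F z ^ 2) * F1 z) h3 A x).deriv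
    have e4 : deriv (fun y => (starRingEnd ℂ) (u t y)) x =
        (starRingEnd ℂ) A * (F1 (x - c * t) : ℂ) := by
      have : (fun y => (starRingEnd ℂ) (u t y)) =
          fun y => (starRingEnd ℂ) A * (F (y - c * t) : ℂ) := by
        funext y; rw [hu', map_mul, Complex.conj_ofReal]
      rw [this]; exact (hs _ _ h1 _ x).deriv
    have e5 : deriv (fun s => u s x) t = A * ((F1 (x - c * t) * (-c) : ℝ) : ℂ) := by
      have : (fun s => u s x) = fun s => A * (F (x - c * s) : ℂ) := by
        funext s; exact hu' s x
      rw [this]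
      have hl : HasDerivAt (fun s : ℝ => x - c * s) (-c) t := by
        simpa using ((hasDerivAt_id t).const_mul c).const_sub x
      have h0 : HasDerivAt (fun s : ℝ => F (x - c * s)) (F1 (x - c * t) * (-c)) t :=
        HasDerivAt.comp (h₂ := F) t (h1 (x - c * t)) hl
      exact (h0.ofReal_comp.const_mul A).deriv
    have hAA : (α + β) * ((starRingEnd ℂ) A * A) = c := by
      have hab : α + β = (((α + β).re : ℝ) : ℂ) := by
        apply Complex.ext
        · simp
        · rw [him, Complex.ofReal_im]
      have hn : ‖A‖ ^ 2 = c / (α + β).re := by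
        rw [hA, norm_mul, Complex.norm_exp_ofReal_mul_I, one_mul, Complex.norm_real,
          Real.norm_eq_abs, sq_abs, Real.sq_sqrt (by positivity)]
      rw [Complex.conj_mul', hab, ← Complex.ofReal_pow, hn, ← Complex.ofReal_mul]
      congr 1
      field_simp
    rw [mkdvLHS, e3, e4, e5, e1, hu', map_mul, Complex.conj_ofReal]
    push_cast
    linear_combination (A * (F (x - c * t) : ℂ) ^ 2 * (F1 (x - c * t) : ℂ)) * hAA
  · rintro rfl t x
    rw [hu, mul_assoc, ← Complex.ofReal_mul]
    congr 2
    have h6 : Real.sqrt (6 * c / (α + β).re) = Real.sqrt 6 * Real.sqrt (c / (α + β).re) := by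
      rw [mul_div_assoc, Real.sqrt_mul (by norm_num)]
    have h66 : Real.sqrt 6 * Real.sqrt 6 = 6 := Real.mul_self_sqrt (by norm_num)
    rw [h6]
    have hp : 0 < Real.sqrt 6 := by positivity
    simp only [sech, Real.tanh_zero, Real.sinh_zero, Real.cosh_zero, div_one, mul_one, mul_zero,
      zero_add, ne_eq, OfNat.ofNat_ne_zero, not_false_eq_true, zero_pow, add_zero]
    have := Real.cosh_pos (Real.sqrt c * (x - c * t))
    field_simp
    linear_combination (-1 : ℝ) * h66
end

section
/- Let α, β ∈ ℂ with Im(α + β) = 0 and Re(α + β) > 0, let c > 0, and let φ ∈ [0, 2π). Then the function u(t,x) = e^{iφ}·√(c/(α+β))·( 1 − 12/(3 + 2·c·(x − c·t)²) ) is smooth on ℝ×ℝ and satisfies the complex mKdV equation u_t + α·conj(u)·u·u_x + β·u²·conj(u)_x + u_xxx = 0 at every point (t,x) ∈ ℝ×ℝ. -/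
theorem stmt8_d0 (c : ℝ) (hc : 0 < c) (y : ℝ) : 3 + 2 * c * y ^ 2 ≠ 0 := by positivity

theorem stmt8_dD (c a x : ℝ) :
    HasDerivAt (fun x : ℝ => 3 + 2 * c * (x - a) ^ 2) (4 * c * (x - a)) x := by
  have h := (((((hasDerivAt_id x).sub_const a).pow 2).const_mul (2 * c)).const_add 3)
  refine HasDerivAt.congr_deriv (f := _) h ?_
  simp
  ring

theorem stmt8_d1 (c : ℝ) (hc : 0 < c) (a x : ℝ) :
    HasDerivAt (fun x : ℝ => 1 - 12 / (3 + 2 * c * (x - a) ^ 2))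
      (48 * c * (x - a) / (3 + 2 * c * (x - a) ^ 2) ^ 2) x := by
  have h0 := stmt8_d0 c hc (x - a)
  have h := (((hasDerivAt_const x (12 : ℝ)).div (stmt8_dD c a x) h0)).const_sub 1
  refine HasDerivAt.congr_deriv (f := _) h ?_
  field_simp
  ring

theorem stmt8_d2 (c : ℝ) (hc : 0 < c) (a x : ℝ) :
    HasDerivAt (fun x : ℝ => 48 * c * (x - a) / (3 + 2 * c * (x - a) ^ 2) ^ 2)
      ((144 * c - 288 * c ^ 2 * (x - a) ^ 2) / (3 + 2 * c * (x - a) ^ 2) ^ 3) x := by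
  have h0 := stmt8_d0 c hc (x - a)
  have h := (((hasDerivAt_id x).sub_const a).const_mul (48 * c)).div
    ((stmt8_dD c a x).pow 2) (pow_ne_zero 2 h0)
  refine HasDerivAt.congr_deriv (f := _) h ?_
  simp
  field_simp
  ring

theorem stmt8_d3 (c : ℝ) (hc : 0 < c) (a x : ℝ) :
    HasDerivAt (fun x : ℝ => (144 * c - 288 * c ^ 2 * (x - a) ^ 2) /
        (3 + 2 * c * (x - a) ^ 2) ^ 3)
      ((-3456 * c ^ 2 * (x - a) + 2304 * c ^ 3 * (x - a) ^ 3) /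
        (3 + 2 * c * (x - a) ^ 2) ^ 4) x := by
  have h0 := stmt8_d0 c hc (x - a)
  have h := (((((hasDerivAt_id x).sub_const a).pow 2).const_mul (288 * c ^ 2)).const_sub
    (144 * c)).div ((stmt8_dD c a x).pow 3) (pow_ne_zero 3 h0)
  refine HasDerivAt.congr_deriv (f := _) h ?_
  simp
  field_simp
  ring

theorem stmt8_dt (c : ℝ) (hc : 0 < c) (t x : ℝ) :
    HasDerivAt (fun t : ℝ => 1 - 12 / (3 + 2 * c * (x - c * t) ^ 2))
      (-c * (48 * c * (x - c * t) / (3 + 2 * c * (x - c * t) ^ 2) ^ 2)) t := by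
  have h1 : HasDerivAt (fun t : ℝ => x - c * t) (-c) t := by
    simpa using ((hasDerivAt_id t).const_mul c).const_sub x
  have h2 := stmt8_d1 c hc 0 (x - c * t)
  simp only [sub_zero] at h2
  have h := h2.comp t h1
  refine HasDerivAt.congr_deriv (f := _) h ?_
  ring


/-- the rational solitary wave (solitary4) for `Im(α+β) = 0`, `Re(α+β) > 0`. -/
theorem stmt8 (α β : ℂ) (him : (α + β).im = 0) (hre : 0 < (α + β).re)
    (c : ℝ) (hc : 0 < c)
    (φ : ℝ) (hφ : φ ∈ Set.Ico 0 (2 * Real.pi))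
    (u : ℝ → ℝ → ℂ)
    (hu : ∀ t x : ℝ, u t x =
      Complex.exp ((φ : ℂ) * Complex.I) * ((Real.sqrt (c / (α + β).re) : ℝ) : ℂ) *
        (((1 - 12 / (3 + 2 * c * (x - c * t) ^ 2) : ℝ) : ℂ))) :
    ContDiff ℝ (⊤ : ℕ∞) (Function.uncurry u)
      ∧ ∀ t x : ℝ, mkdvLHS α β u t x = 0 := by
  set A : ℝ := Real.sqrt (c / (α + β).re) with hA
  set e : ℂ := Complex.exp ((φ : ℂ) * Complex.I) with he
  have hAA : (α + β).re * A ^ 2 = c := by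
    rw [hA, Real.sq_sqrt (by positivity)]
    field_simp
  have hab : α + β = (((α + β).re : ℝ) : ℂ) := by
    apply Complex.ext <;> simp
    simpa using him
  have hAC : (α + β) * (A : ℂ) ^ 2 = c := by
    rw [hab]
    exact_mod_cast hAA
  have hee : (starRingEnd ℂ) e * e = 1 := by
    rw [he, ← Complex.exp_conj, ← Complex.exp_add]
    simp
  refine ⟨?_, ?_⟩
  · have h : Function.uncurry u = fun p : ℝ × ℝ =>
        e * (A : ℂ) * (((1 - 12 / (3 + 2 * c * (p.2 - c * p.1) ^ 2) : ℝ) : ℂ)) := by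
      funext p
      exact hu p.1 p.2
    rw [h]
    refine contDiff_const.mul (Complex.ofRealCLM.contDiff.comp ?_)
    refine contDiff_const.sub (contDiff_const.div (by fun_prop) ?_)
    intro p
    exact stmt8_d0 c hc _
  · intro t x
    have hut : u t = fun x => e * (A : ℂ) *
        (((1 - 12 / (3 + 2 * c * (x - c * t) ^ 2) : ℝ) : ℂ)) := funext (hu t)
    have hus : (fun s => u s x) = fun s => e * (A : ℂ) *
        (((1 - 12 / (3 + 2 * c * (x - c * s) ^ 2) : ℝ) : ℂ)) := funext fun s => hu s x
    have huc : (fun y => (starRingEnd ℂ) (u t y)) = fun y => (starRingEnd ℂ) e * (A : ℂ) *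
        (((1 - 12 / (3 + 2 * c * (y - c * t) ^ 2) : ℝ) : ℂ)) := by
      funext y
      rw [hu, map_mul, map_mul, Complex.conj_ofReal, Complex.conj_ofReal]
    have E1 : deriv (u t) = fun x => e * (A : ℂ) *
        ((48 * c * (x - c * t) / (3 + 2 * c * (x - c * t) ^ 2) ^ 2 : ℝ) : ℂ) := by
      funext x
      rw [hut]
      exact ((stmt8_d1 c hc (c * t) x).ofReal_comp.const_mul (e * (A : ℂ))).deriv
    have E2 : deriv (deriv (u t)) = fun x => e * (A : ℂ) *
        (((144 * c - 288 * c ^ 2 * (x - c * t) ^ 2) /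
          (3 + 2 * c * (x - c * t) ^ 2) ^ 3 : ℝ) : ℂ) := by
      funext x
      rw [E1]
      exact ((stmt8_d2 c hc (c * t) x).ofReal_comp.const_mul (e * (A : ℂ))).deriv
    have E3 : deriv (deriv (deriv (u t))) x = e * (A : ℂ) *
        (((-3456 * c ^ 2 * (x - c * t) + 2304 * c ^ 3 * (x - c * t) ^ 3) /
          (3 + 2 * c * (x - c * t) ^ 2) ^ 4 : ℝ) : ℂ) := by
      rw [E2]
      exact ((stmt8_d3 c hc (c * t) x).ofReal_comp.const_mul (e * (A : ℂ))).deriv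
    have Et : deriv (fun s => u s x) t = e * (A : ℂ) *
        ((-c * (48 * c * (x - c * t) / (3 + 2 * c * (x - c * t) ^ 2) ^ 2) : ℝ) : ℂ) := by
      rw [hus]
      exact ((stmt8_dt c hc t x).ofReal_comp.const_mul (e * (A : ℂ))).deriv
    have Ec : deriv (fun y => (starRingEnd ℂ) (u t y)) x = (starRingEnd ℂ) e * (A : ℂ) *
        ((48 * c * (x - c * t) / (3 + 2 * c * (x - c * t) ^ 2) ^ 2 : ℝ) : ℂ) := by
      rw [huc]
      exact ((stmt8_d1 c hc (c * t) x).ofReal_comp.const_mul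
        ((starRingEnd ℂ) e * (A : ℂ))).deriv
    have key : -c * (48 * c * (x - c * t) / (3 + 2 * c * (x - c * t) ^ 2) ^ 2)
        + c * (1 - 12 / (3 + 2 * c * (x - c * t) ^ 2)) ^ 2 *
          (48 * c * (x - c * t) / (3 + 2 * c * (x - c * t) ^ 2) ^ 2)
        + (-3456 * c ^ 2 * (x - c * t) + 2304 * c ^ 3 * (x - c * t) ^ 3) /
          (3 + 2 * c * (x - c * t) ^ 2) ^ 4 = 0 := by
      have h0 := stmt8_d0 c hc (x - c * t)
      generalize x - c * t = y at *
      field_simp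
      ring
    unfold mkdvLHS
    rw [Et, E3, Ec, E1, hu, map_mul, map_mul, Complex.conj_ofReal, Complex.conj_ofReal]
    dsimp only
    generalize -c * (48 * c * (x - c * t) / (3 + 2 * c * (x - c * t) ^ 2) ^ 2) = ft at *
    generalize (48 * c * (x - c * t) / (3 + 2 * c * (x - c * t) ^ 2) ^ 2) = f1 at *
    generalize (1 - 12 / (3 + 2 * c * (x - c * t) ^ 2)) = f at *
    generalize (-3456 * c ^ 2 * (x - c * t) + 2304 * c ^ 3 * (x - c * t) ^ 3) /
          (3 + 2 * c * (x - c * t) ^ 2) ^ 4 = f3 at *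
    have keyC : (ft : ℂ) + c * (f : ℂ) ^ 2 * f1 + f3 = 0 := by exact_mod_cast key
    clear_value e A
    linear_combination (e * (A : ℂ)) * keyC + (e * (A : ℂ) * (f : ℂ) ^ 2 * f1) * hAC +
      ((α + β) * (A : ℂ) ^ 3 * e * (f : ℂ) ^ 2 * f1) * hee
end

section
/- Let α ∈ ℂ, β = −α, c > 0, Θ ∈ ℝ, φ ∈ [0, 2π). Then the function u(t,x) = e^{iφ}·( sinh Θ + exp(−√c·|x − c·t|) ) satisfies the complex mKdV equation u_t + α·conj(u)·u·u_x + β·u²·conj(u)_x + u_xxx = 0 at every point (t,x) with x ≠ c·t (u has a cusp along the line x = c·t). -/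
theorem aux_key (α : ℂ) (c k S : ℝ) (E : ℂ) (hE : E * (starRingEnd ℂ) E = 1) (hk : k ^ 2 = c)
    (u : ℝ → ℝ → ℂ) (t x : ℝ)
    (h1 : (fun s => u s x) =ᶠ[nhds t] fun s => E * ((S + Real.exp (k * (x - c * s)) : ℝ) : ℂ))
    (h2 : u t =ᶠ[nhds x] fun y => E * ((S + Real.exp (k * (y - c * t)) : ℝ) : ℂ)) :
    mkdvLHS α (-α) u t x = 0 := by
  have hd : ∀ (A : ℂ) (B y : ℝ), HasDerivAt
      (fun y : ℝ => A * ((B + Real.exp (k * (y - c * t)) : ℝ) : ℂ))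
      ((A * k) * ((0 + Real.exp (k * (y - c * t)) : ℝ) : ℂ)) y := by
    intro A B y
    have h : HasDerivAt (fun y : ℝ => B + Real.exp (k * (y - c * t)))
        (Real.exp (k * (y - c * t)) * (k * 1)) y :=
      ((((hasDerivAt_id y).sub_const (c * t)).const_mul k).exp).const_add B
    have h' := (h.ofReal_comp).const_mul A
    refine h'.congr_deriv ?_
    push_cast
    ring
  have hdf : ∀ (A : ℂ) (B : ℝ), deriv
      (fun y : ℝ => A * ((B + Real.exp (k * (y - c * t)) : ℝ) : ℂ)) =
      fun y => ((A * k) * ((0 + Real.exp (k * (y - c * t)) : ℝ) : ℂ)) :=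
    fun A B => funext fun y => (hd A B y).deriv
  have ht : HasDerivAt (fun s : ℝ => E * ((S + Real.exp (k * (x - c * s)) : ℝ) : ℂ))
      (E * ((Real.exp (k * (x - c * t)) * (k * (-(c * 1))) : ℝ) : ℂ)) t := by
    have h : HasDerivAt (fun s : ℝ => S + Real.exp (k * (x - c * s)))
        (Real.exp (k * (x - c * t)) * (k * (-(c * 1)))) t :=
      (((((hasDerivAt_id t).const_mul c).const_sub x).const_mul k).exp).const_add S
    exact (h.ofReal_comp).const_mul E
  have h3 : (fun y => (starRingEnd ℂ) (u t y)) =ᶠ[nhds x]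
      fun y => (starRingEnd ℂ) E * ((S + Real.exp (k * (y - c * t)) : ℝ) : ℂ) := by
    filter_upwards [h2] with y hy
    rw [hy, map_mul, Complex.conj_ofReal]
  unfold mkdvLHS
  rw [h1.deriv_eq, h2.deriv.deriv.deriv_eq, h2.deriv_eq, h3.deriv_eq, h2.eq_of_nhds, ht.deriv]
  simp only [hdf]
  rw [map_mul, Complex.conj_ofReal]
  subst hk
  push_cast
  ring

theorem stmt9 (α : ℂ) (β : ℂ) (hβ : β = -α) (c : ℝ) (hc : 0 < c)
    (Θ φ : ℝ) (hφ : φ ∈ Set.Ico 0 (2 * Real.pi))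
    (u : ℝ → ℝ → ℂ)
    (hu : ∀ t x : ℝ, u t x =
      Complex.exp ((φ : ℂ) * Complex.I) *
        (((Real.sinh Θ + Real.exp (-(Real.sqrt c) * |x - c * t|) : ℝ) : ℂ))) :
    ∀ t x : ℝ, x ≠ c * t → mkdvLHS α β u t x = 0 := by
  intro t x hx
  subst hβ
  have hE : Complex.exp ((φ : ℂ) * Complex.I) *
      (starRingEnd ℂ) (Complex.exp ((φ : ℂ) * Complex.I)) = 1 := by
    rw [Complex.mul_conj, Complex.normSq_eq_norm_sq, Complex.norm_exp_ofReal_mul_I]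
    simp
  have hs := Real.sq_sqrt hc.le
  have c1 : Continuous fun s : ℝ => x - c * s := by fun_prop
  have c2 : Continuous fun y : ℝ => y - c * t := by fun_prop
  rcases lt_or_gt_of_ne (sub_ne_zero.mpr hx) with h | h
  · refine aux_key α c (Real.sqrt c) (Real.sinh Θ) _ hE hs u t x ?_ ?_
    · filter_upwards [c1.continuousAt.eventually_lt_const h] with s h'
      rw [hu, abs_of_neg h', neg_mul_neg]
    · filter_upwards [c2.continuousAt.eventually_lt_const h] with s h'
      rw [hu, abs_of_neg h', neg_mul_neg]
  · refine aux_key α c (-Real.sqrt c) (Real.sinh Θ) _ hE (by rw [neg_sq, hs]) u t x ?_ ?_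
    · filter_upwards [c1.continuousAt.eventually_const_lt h] with s h'
      rw [hu, abs_of_pos h']
    · filter_upwards [c2.continuousAt.eventually_const_lt h] with s h'
      rw [hu, abs_of_pos h']
end

section
/- Let α, β ∈ ℂ with Im(α + β) = 0 and Re(α + β) < 0, let c < 0, and let φ ∈ [0, 2π). Then the function u(t,x) = e^{iφ}·√(3c/(α+β))·tanh(√(−c/2)·(x − c·t)) (where 3c/(α+β) > 0, so the square root is the positive real one) is smooth on ℝ×ℝ and satisfies the complex mKdV equation u_t + α·conj(u)·u·u_x + β·u²·conj(u)_x + u_xxx = 0 at every point (t,x) ∈ ℝ×ℝ. -/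
lemma kink_hasDerivAt_tanh (x : ℝ) : HasDerivAt Real.tanh (1 - Real.tanh x ^ 2) x := by
  have hc : Real.cosh x ≠ 0 := (Real.cosh_pos x).ne'
  have h := (Real.hasDerivAt_sinh x).div (Real.hasDerivAt_cosh x) hc
  have e : Real.tanh = Real.sinh / Real.cosh := by
    funext y; simp [Real.tanh_eq_sinh_div_cosh]
  rw [e]
  refine h.congr_deriv ?_
  simp only [Pi.div_apply]
  field_simp

lemma kink_contDiff_tanh : ContDiff ℝ (⊤ : ℕ∞) Real.tanh := by
  have e : Real.tanh = fun y => Real.sinh y / Real.cosh y := by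
    funext y; simp [Real.tanh_eq_sinh_div_cosh]
  rw [e]
  exact Real.contDiff_sinh.div Real.contDiff_cosh (fun x => ne_of_gt (Real.cosh_pos x))

/-- the tanh kink (kink1) for `Im(α+β) = 0`, `Re(α+β) < 0`, `c < 0`. -/
theorem stmt10 (α β : ℂ) (him : (α + β).im = 0) (hre : (α + β).re < 0)
    (c : ℝ) (hc : c < 0)
    (φ : ℝ) (hφ : φ ∈ Set.Ico 0 (2 * Real.pi))
    (u : ℝ → ℝ → ℂ)
    (hu : ∀ t x : ℝ, u t x =
      Complex.exp ((φ : ℂ) * Complex.I) *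
        (((Real.sqrt (3 * c / (α + β).re)
          * Real.tanh (Real.sqrt (-c / 2) * (x - c * t)) : ℝ) : ℂ))) :
    ContDiff ℝ (⊤ : ℕ∞) (Function.uncurry u)
      ∧ ∀ t x : ℝ, mkdvLHS α β u t x = 0 := by
  have hA2 : Real.sqrt (3 * c / (α + β).re) ^ 2 * (α + β).re = 3 * c := by
    rw [Real.sq_sqrt (div_nonneg_of_nonpos (by linarith) hre.le)]
    exact div_mul_cancel₀ _ hre.ne
  have hk2 : Real.sqrt (-c / 2) ^ 2 = -c / 2 := Real.sq_sqrt (by linarith)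
  have hab : α + β = (((α + β).re : ℝ) : ℂ) := by
    apply Complex.ext
    · simp
    · simpa using him
  have hE : Complex.exp ((φ : ℂ) * Complex.I) *
      (starRingEnd ℂ) (Complex.exp ((φ : ℂ) * Complex.I)) = 1 := by
    rw [Complex.mul_conj, Complex.normSq_eq_norm_sq, Complex.norm_exp_ofReal_mul_I]; simp
  generalize Real.sqrt (3 * c / (α + β).re) = A at *
  generalize Real.sqrt (-c / 2) = k at *
  generalize (α + β).re = r at *
  generalize Complex.exp ((φ : ℂ) * Complex.I) = E at *
  constructor
  · have e : Function.uncurry u = fun p : ℝ × ℝ =>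
        E * ((A * Real.tanh (k * (p.2 - c * p.1)) : ℝ) : ℂ) := by
      funext p; exact hu p.1 p.2
    rw [e]
    refine contDiff_const.mul (Complex.ofRealCLM.contDiff.comp ?_)
    refine contDiff_const.mul (kink_contDiff_tanh.comp ?_)
    fun_prop
  · intro t x
    have hT : ∀ y, HasDerivAt (fun y => Real.tanh (k * (y - c * t)))
        ((1 - Real.tanh (k * (y - c * t)) ^ 2) * k) y := by
      intro y
      have h1 : HasDerivAt (fun y => k * (y - c * t)) k y := by
        simpa using ((hasDerivAt_id y).sub_const (c * t)).const_mul k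
      exact (kink_hasDerivAt_tanh _).comp y h1
    have hTt : HasDerivAt (fun s => Real.tanh (k * (x - c * s)))
        ((1 - Real.tanh (k * (x - c * t)) ^ 2) * (k * -c)) t := by
      have h1 : HasDerivAt (fun s => k * (x - c * s)) (k * -c) t := by
        simpa using (((hasDerivAt_id t).const_mul c).const_sub x).const_mul k
      exact (kink_hasDerivAt_tanh _).comp t h1
    have d0 : deriv (fun s => u s x) t =
        E * ((A * ((1 - Real.tanh (k * (x - c * t)) ^ 2) * (k * -c)) : ℝ) : ℂ) := by
      simp only [hu]
      exact ((hTt.const_mul A).ofReal_comp.const_mul E).deriv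
    have d1 : deriv (u t) = fun y =>
        E * ((A * ((1 - Real.tanh (k * (y - c * t)) ^ 2) * k) : ℝ) : ℂ) := by
      rw [show u t = _ from funext (hu t)]
      funext y
      exact (((hT y).const_mul A).ofReal_comp.const_mul E).deriv
    have dc : deriv (fun y => (starRingEnd ℂ) (u t y)) x = (starRingEnd ℂ) E *
        ((A * ((1 - Real.tanh (k * (x - c * t)) ^ 2) * k) : ℝ) : ℂ) := by
      simp only [hu, map_mul, Complex.conj_ofReal]
      exact (((hT x).const_mul A).ofReal_comp.const_mul _).deriv
    have d2 : deriv (deriv (u t)) = fun y =>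
        E * ((A * ((-(2 * Real.tanh (k * (y - c * t)) *
          ((1 - Real.tanh (k * (y - c * t)) ^ 2) * k))) * k) : ℝ) : ℂ) := by
      rw [d1]
      funext y
      have h := (((((hT y).pow 2).const_sub 1).mul_const k).const_mul A).ofReal_comp.const_mul E
      refine (h.congr_deriv ?_).deriv
      simp
    have d3 : deriv (deriv (deriv (u t))) x =
        E * ((A * k ^ 3 * ((1 - Real.tanh (k * (x - c * t)) ^ 2) *
          (6 * Real.tanh (k * (x - c * t)) ^ 2 - 2)) : ℝ) : ℂ) := by
      rw [d2]
      have h := (((((hT x).const_mul 2).mul ((((hT x).pow 2).const_sub 1).mul_const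
        k)).neg.mul_const k).const_mul A).ofReal_comp.const_mul E
      refine (h.congr_deriv ?_).deriv
      congr 2
      simp
      ring
    unfold mkdvLHS
    rw [d0, dc, d3, d1, hu]
    simp only [map_mul, Complex.conj_ofReal]
    generalize Real.tanh (k * (x - c * t)) = T
    have hA2' : (A : ℂ) ^ 2 * (r : ℂ) = 3 * c := by exact_mod_cast hA2
    have hk2' : (k : ℂ) ^ 2 = -c / 2 := by exact_mod_cast congrArg (Complex.ofReal) hk2
    rw [← hab] at hA2'
    generalize (starRingEnd ℂ) E = F at *
    push_cast
    linear_combination (α + β) * E * (A : ℂ) ^ 3 * T ^ 2 * (1 - T ^ 2) * k * hE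
      + E * A * T ^ 2 * (1 - T ^ 2) * k * hA2'
      + E * A * k * (1 - T ^ 2) * (6 * T ^ 2 - 2) * hk2'
end

section
/- Let α > 0 be real, β = 0, k ∈ ℝ, c ∈ ℝ with c + 3k² > 0, and φ ∈ [0, 2π). Then the function u(t,x) = √(6(c + 3k²)/α)·e^{iφ}·exp( i·k·(x − (3c + 8k²)·t) )·sech( √(c + 3k²)·(x − c·t) ) is smooth on ℝ×ℝ and satisfies the complex mKdV equation u_t + α·conj(u)·u·u_x + u_xxx = 0 at every point (t,x) ∈ ℝ×ℝ. -/
theorem hasDerivAt_sech (y : ℝ) :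
    HasDerivAt sech (-(sech y * Real.tanh y)) y := by
  have hc : Real.cosh y ≠ 0 := (Real.cosh_pos y).ne'
  have h := (Real.hasDerivAt_cosh y).inv hc
  have e : sech = (Real.cosh)⁻¹ := by
    funext z; simp [sech]
  rw [e]
  refine HasDerivAt.congr_deriv h ?_
  rw [Real.tanh_eq_sinh_div_cosh]
  simp only [Pi.inv_apply]
  field_simp

theorem hasDerivAt_tanh_aux (y : ℝ) :
    HasDerivAt Real.tanh (1 - Real.tanh y ^ 2) y := by
  have hc : Real.cosh y ≠ 0 := (Real.cosh_pos y).ne'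
  have h := (Real.hasDerivAt_sinh y).div (Real.hasDerivAt_cosh y) hc
  have e : Real.tanh = Real.sinh / Real.cosh := by
    funext z; simp [Real.tanh_eq_sinh_div_cosh]
  rw [e]
  refine HasDerivAt.congr_deriv h ?_
  simp only [Pi.div_apply]
  field_simp

theorem sech_sq_aux (y : ℝ) : sech y ^ 2 = 1 - Real.tanh y ^ 2 := by
  have hc : Real.cosh y ≠ 0 := (Real.cosh_pos y).ne'
  have := Real.cosh_sq y
  rw [Real.tanh_eq_sinh_div_cosh, sech]
  field_simp
  linarith

/-- the sech solitary wave with linear phase, for `α > 0` real, `β = 0`,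
`c + 3k² > 0`. -/
theorem stmt12 (α : ℝ) (hα : 0 < α) (k c : ℝ) (hck : 0 < c + 3 * k ^ 2)
    (φ : ℝ) (hφ : φ ∈ Set.Ico 0 (2 * Real.pi))
    (u : ℝ → ℝ → ℂ)
    (hu : ∀ t x : ℝ, u t x =
      ((Real.sqrt (6 * (c + 3 * k ^ 2) / α) : ℝ) : ℂ)
        * Complex.exp ((φ : ℂ) * Complex.I)
        * Complex.exp (Complex.I * ((k * (x - (3 * c + 8 * k ^ 2) * t) : ℝ) : ℂ))
        * ((sech (Real.sqrt (c + 3 * k ^ 2) * (x - c * t)) : ℝ) : ℂ)) :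
    ContDiff ℝ (⊤ : ℕ∞) (Function.uncurry u)
      ∧ ∀ t x : ℝ, mkdvLHS (α : ℂ) 0 u t x = 0 := by
  have hm0 : Real.sqrt (c + 3 * k ^ 2) ^ 2 = c + 3 * k ^ 2 := Real.sq_sqrt hck.le
  have hA0 : Real.sqrt (6 * (c + 3 * k ^ 2) / α) ^ 2 = 6 * (c + 3 * k ^ 2) / α :=
    Real.sq_sqrt (by positivity)
  generalize Real.sqrt (c + 3 * k ^ 2) = m at *
  generalize Real.sqrt (6 * (c + 3 * k ^ 2) / α) = A at *
  have hu2 : u = fun t x => (A : ℂ)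
        * Complex.exp ((φ : ℂ) * Complex.I)
        * Complex.exp (Complex.I * ((k * (x - (3 * c + 8 * k ^ 2) * t) : ℝ) : ℂ))
        * ((sech (m * (x - c * t)) : ℝ) : ℂ) := by
    funext t x; exact hu t x
  constructor
  · have hs : ContDiff ℝ (⊤ : ℕ∞) sech := by
      have : sech = fun x => 1 / Real.cosh x := rfl
      rw [this]
      exact contDiff_const.div Real.contDiff_cosh (fun x => (Real.cosh_pos x).ne')
    have h1 : ContDiff ℝ (⊤ : ℕ∞) (fun p : ℝ × ℝ => k * (p.2 - (3 * c + 8 * k ^ 2) * p.1)) := by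
      fun_prop
    have h2 : ContDiff ℝ (⊤ : ℕ∞) (fun p : ℝ × ℝ => m * (p.2 - c * p.1)) := by
      fun_prop
    have h3 := Complex.ofRealCLM.contDiff.comp h1
    have h4 := Complex.ofRealCLM.contDiff.comp (hs.comp h2)
    rw [hu2]
    exact (contDiff_const.mul ((contDiff_const.mul h3).cexp)).mul h4
  · -- logarithmic derivatives
    have hx : ∀ t x : ℝ, HasDerivAt (u t)
        (u t x * (Complex.I * k - m * (Real.tanh (m * (x - c * t)) : ℝ))) x := by
      intro t x
      have a1 : HasDerivAt (fun y : ℝ => k * (y - (3 * c + 8 * k ^ 2) * t)) (k * 1) x :=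
        ((hasDerivAt_id x).sub_const _).const_mul k
      have a2 : HasDerivAt (fun y : ℝ => m * (y - c * t)) (m * 1) x :=
        ((hasDerivAt_id x).sub_const _).const_mul m
      have b1 := ((a1.ofReal_comp.const_mul Complex.I).cexp).const_mul
        ((A : ℂ) * Complex.exp ((φ : ℂ) * Complex.I))
      have b2 := ((hasDerivAt_sech _).comp x a2).ofReal_comp
      have h := b1.mul b2
      rw [hu2]
      refine HasDerivAt.congr_deriv h ?_
      simp only [Function.comp]
      push_cast
      ring
    have ht : ∀ t x : ℝ, HasDerivAt (fun s => u s x)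
        (u t x * (-Complex.I * k * (3 * c + 8 * k ^ 2)
          + m * c * (Real.tanh (m * (x - c * t)) : ℝ))) t := by
      intro t x
      have a1 : HasDerivAt (fun s : ℝ => k * (x - (3 * c + 8 * k ^ 2) * s))
          (k * (-((3 * c + 8 * k ^ 2) * 1))) t :=
        (((hasDerivAt_id t).const_mul _).const_sub x).const_mul k
      have a2 : HasDerivAt (fun s : ℝ => m * (x - c * s)) (m * (-(c * 1))) t :=
        (((hasDerivAt_id t).const_mul _).const_sub x).const_mul m
      have b1 := ((a1.ofReal_comp.const_mul Complex.I).cexp).const_mul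
        ((A : ℂ) * Complex.exp ((φ : ℂ) * Complex.I))
      have b2 := ((hasDerivAt_sech _).comp t a2).ofReal_comp
      have h := b1.mul b2
      rw [hu2]
      refine HasDerivAt.congr_deriv h ?_
      simp only [Function.comp]
      push_cast
      ring
    have hT : ∀ t x : ℝ, HasDerivAt (fun y : ℝ => ((Real.tanh (m * (y - c * t)) : ℝ) : ℂ))
        (m * (1 - ((Real.tanh (m * (x - c * t)) : ℝ) : ℂ) ^ 2)) x := by
      intro t x
      have a2 : HasDerivAt (fun y : ℝ => m * (y - c * t)) (m * 1) x :=
        ((hasDerivAt_id x).sub_const _).const_mul m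
      have h := ((hasDerivAt_tanh_aux _).comp x a2).ofReal_comp
      refine HasDerivAt.congr_deriv h ?_
      push_cast
      ring
    have hnorm : ∀ t x : ℝ, (starRingEnd ℂ) (u t x) * u t x
        = (A : ℂ) ^ 2 * (1 - ((Real.tanh (m * (x - c * t)) : ℝ) : ℂ) ^ 2) := by
      intro t x
      have hS := congrArg (fun r : ℝ => (r : ℂ)) (sech_sq_aux (m * (x - c * t)))
      simp only [Complex.ofReal_sub, Complex.ofReal_pow, Complex.ofReal_one] at hS
      rw [← hS, mul_comm, Complex.mul_conj, Complex.normSq_eq_norm_sq, hu t x]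
      rw [norm_mul, norm_mul, norm_mul, Complex.norm_exp_ofReal_mul_I, mul_comm Complex.I,
        Complex.norm_exp_ofReal_mul_I, Complex.norm_real, Complex.norm_real]
      rw [mul_one, mul_one, mul_pow, Real.norm_eq_abs, Real.norm_eq_abs, sq_abs, sq_abs]
      push_cast
      rfl
    intro t x
    have d1 : deriv (u t) = fun y =>
        u t y * (Complex.I * k - m * (Real.tanh (m * (y - c * t)) : ℝ)) :=
      funext fun y => (hx t y).deriv
    have d2 : deriv (deriv (u t)) = fun y =>
        u t y * ((Complex.I * k - m * (Real.tanh (m * (y - c * t)) : ℝ))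
          * (Complex.I * k - m * (Real.tanh (m * (y - c * t)) : ℝ))
          - m * (m * (1 - (Real.tanh (m * (y - c * t)) : ℝ)
            * ((Real.tanh (m * (y - c * t)) : ℝ) : ℂ)))) := by
      rw [d1]
      funext y
      have h := (hx t y).mul (((hT t y).const_mul (m : ℂ)).const_sub (Complex.I * k))
      refine h.deriv.trans ?_
      ring
    have g := ((hT t x).const_mul (m : ℂ)).const_sub (Complex.I * k)
    have q := ((((hT t x).mul (hT t x)).const_sub 1).const_mul (m : ℂ)).const_mul (m : ℂ)
    have d3 := ((hx t x).mul ((g.mul g).sub q)).deriv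
    have d3' := (congrFun (congrArg deriv d2) x).trans d3
    unfold mkdvLHS
    rw [d3', d1, (ht t x).deriv, mul_assoc (α : ℂ), hnorm]
    simp only [Pi.mul_apply, Pi.sub_apply]
    have hαA : (α : ℂ) * (A : ℂ) ^ 2 = 6 * (m : ℂ) ^ 2 := by
      have : α * A ^ 2 = 6 * m ^ 2 := by
        rw [hA0, hm0]; field_simp
      exact_mod_cast this
    have hmC : (c : ℂ) = (m : ℂ) ^ 2 - 3 * (k : ℂ) ^ 2 := by
      have : c = m ^ 2 - 3 * k ^ 2 := by linarith
      exact_mod_cast this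
    rw [← mul_assoc (α : ℂ), hαA]
    generalize ((Real.tanh (m * (x - c * t)) : ℝ) : ℂ) = T
    generalize u t x = U
    rw [hmC]
    have hI := Complex.I_sq
    have hI3 : Complex.I ^ 3 = -Complex.I := by rw [pow_succ, hI]; ring
    ring_nf
    simp only [hI, hI3]
    ring
end

section
/- Let α, β ∈ ℂ and σ ∈ ℝ, σ ≠ 0, satisfy α·(σ + i) + β·(σ − i) = 0 (which forces |α| = |β|). Let c ∈ ℝ satisfy either (c > 0 and σ² > 3) or (c < 0 and σ² < 3), so that q := √(c/(σ² − 3)) and κ := |σ|·q are positive reals. Let A > 0 and φ ∈ [0, 2π). Then the peakon u(t,x) = A·e^{iφ}·exp( −i·ε·q·( x − ((3σ² − 1)/(σ² − 3))·c·t ) )·exp( −κ·|x − c·t| ), where ε = sgn(σ·(x − c·t)), satisfies the complex mKdV equation u_t + α·conj(u)·u·u_x + β·u²·conj(u)_x + u_xxx = 0 at every point (t,x) with x ≠ c·t. -/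
open Filter Topology in
theorem mkdv_aux (α β B m n : ℂ) (u : ℝ → ℝ → ℂ) (t x : ℝ)
    (h1 : ∀ᶠ s in 𝓝 t, u s x = B * Complex.exp (m * x + n * s))
    (h2 : ∀ᶠ y in 𝓝 x, u t y = B * Complex.exp (m * y + n * t))
    (hab : α * m + β * (starRingEnd ℂ) m = 0) (hn : n + m ^ 3 = 0) :
    mkdvLHS α β u t x = 0 := by
  have key : ∀ (C : ℂ) (y : ℝ), HasDerivAt (fun y : ℝ => C * Complex.exp (m * y + n * t))
      (C * m * Complex.exp (m * y + n * t)) y := by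
    intro C y
    have h := ((((Complex.ofRealCLM.hasDerivAt (x := y)).const_mul m).add_const
      (n * t)).cexp).const_mul C
    simp only [Complex.ofRealCLM_apply, Complex.ofReal_one] at h
    refine HasDerivAt.congr_deriv h ?_
    ring
  have keyt : HasDerivAt (fun s : ℝ => B * Complex.exp (m * x + n * s))
      (B * n * Complex.exp (m * x + n * t)) t := by
    have h := ((((Complex.ofRealCLM.hasDerivAt (x := t)).const_mul n).const_add
      (m * x)).cexp).const_mul B
    simp only [Complex.ofRealCLM_apply, Complex.ofReal_one] at h
    refine HasDerivAt.congr_deriv h ?_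
    ring
  have hd : ∀ C : ℂ, deriv (fun y : ℝ => C * Complex.exp (m * y + n * t)) =
      fun y : ℝ => C * m * Complex.exp (m * y + n * t) := fun C => funext fun y => (key C y).deriv
  have h2' : u t =ᶠ[𝓝 x] fun y : ℝ => B * Complex.exp (m * y + n * t) := h2
  have d1 := h2'.deriv
  rw [hd] at d1
  have d2 := d1.deriv
  rw [hd] at d2
  have d3 := d2.deriv
  rw [hd] at d3
  have ht : deriv (fun s => u s x) t = B * n * Complex.exp (m * x + n * t) := by
    have h1' : (fun s => u s x) =ᶠ[𝓝 t] fun s : ℝ => B * Complex.exp (m * x + n * s) := h1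
    rw [h1'.deriv_eq, keyt.deriv]
  have hux : HasDerivAt (u t) (B * m * Complex.exp (m * x + n * t)) x :=
    (key B x).congr_of_eventuallyEq h2'
  have hcx : deriv (fun y => (starRingEnd ℂ) (u t y)) x =
      (starRingEnd ℂ) (B * m * Complex.exp (m * x + n * t)) := by
    have := hux.star
    exact this.deriv
  unfold mkdvLHS
  rw [ht, hcx, d1.self_of_nhds, d3.self_of_nhds, h2.self_of_nhds]
  simp only [map_mul]
  generalize Complex.exp (m * x + n * t) = E
  linear_combination (B * E) * hn +
    (B ^ 2 * E ^ 2 * (starRingEnd ℂ) B * (starRingEnd ℂ) E) * hab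

/-- the singular peakon with linear phase, for coefficients satisfying
`α·(σ + i) + β·(σ − i) = 0` with `σ ≠ 0` real; it satisfies the complex mKdV
equation away from the peak line `x = c·t`.  Here `q = √(c/(σ² − 3))`,
`κ = |σ|·q`, and `ε = sgn(σ·(x − c·t))`. -/
theorem stmt13 (α β : ℂ) (σ : ℝ) (hσ : σ ≠ 0)
    (hαβ : α * ((σ : ℂ) + Complex.I) + β * ((σ : ℂ) - Complex.I) = 0)
    (c : ℝ) (hc : (0 < c ∧ 3 < σ ^ 2) ∨ (c < 0 ∧ σ ^ 2 < 3))
    (q κ : ℝ) (hq : q = Real.sqrt (c / (σ ^ 2 - 3))) (hκ : κ = |σ| * q)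
    (A : ℝ) (hA : 0 < A) (φ : ℝ) (hφ : φ ∈ Set.Ico 0 (2 * Real.pi))
    (u : ℝ → ℝ → ℂ)
    (hu : ∀ t x : ℝ, u t x =
      (A : ℂ) * Complex.exp ((φ : ℂ) * Complex.I)
        * Complex.exp (-Complex.I *
            ((Real.sign (σ * (x - c * t)) * q *
              (x - ((3 * σ ^ 2 - 1) / (σ ^ 2 - 3)) * c * t) : ℝ) : ℂ))
        * ((Real.exp (-κ * |x - c * t|) : ℝ) : ℂ)) :
    0 < q ∧ 0 < κ ∧ ∀ t x : ℝ, x ≠ c * t → mkdvLHS α β u t x = 0 := by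
  have hs3 : σ ^ 2 - 3 ≠ 0 := by
    rcases hc with h | h
    · linarith [h.2]
    · linarith [h.2]
  have hpos : 0 < c / (σ ^ 2 - 3) := by
    rcases hc with h | h
    · exact div_pos h.1 (by linarith [h.2])
    · exact div_pos_of_neg_of_neg h.1 (by linarith [h.2])
  have hq0 : 0 < q := by rw [hq]; exact Real.sqrt_pos.2 hpos
  have hq2 : q ^ 2 * (σ ^ 2 - 3) = c := by
    rw [hq, Real.sq_sqrt hpos.le]; field_simp
  refine ⟨hq0, by rw [hκ]; exact mul_pos (abs_pos.2 hσ) hq0, ?_⟩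
  intro t x hx
  have hx' : x - c * t ≠ 0 := sub_ne_zero.2 hx
  obtain ⟨e, he2, he⟩ : ∃ e : ℝ, e ^ 2 = 1 ∧ ∀ s y : ℝ, 0 < (x - c * t) * (y - c * s) →
      Real.sign (σ * (y - c * s)) = e ∧ |σ| * |y - c * s| = e * σ * (y - c * s) := by
    have hz : σ * (x - c * t) ≠ 0 := mul_ne_zero hσ hx'
    have hσ2 : 0 < σ ^ 2 := by positivity
    rcases lt_or_gt_of_ne hz with h | h
    · refine ⟨-1, by norm_num, fun s y hy => ?_⟩
      have : σ * (y - c * s) < 0 := by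
        by_contra! h'
        nlinarith [mul_pos hσ2 hy]
      rw [← abs_mul, Real.sign_of_neg this, abs_of_neg this]
      exact ⟨rfl, by ring⟩
    · refine ⟨1, by norm_num, fun s y hy => ?_⟩
      have : 0 < σ * (y - c * s) := by
        by_contra! h'
        nlinarith [mul_pos hσ2 hy]
      rw [← abs_mul, Real.sign_of_pos this, abs_of_pos this]
      exact ⟨rfl, by ring⟩
  have hrep : ∀ s y : ℝ, 0 < (x - c * t) * (y - c * s) →
      u s y = ((A : ℂ) * Complex.exp ((φ : ℂ) * Complex.I)) *
        Complex.exp (-(e * q) * (σ + Complex.I) * y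
          + (e * q ^ 3) * (σ + Complex.I) ^ 3 * s) := by
    intro s y hy
    obtain ⟨g1, g2⟩ := he s y hy
    have g3 : -κ * |y - c * s| = -(e * q * σ * (y - c * s)) := by
      rw [hκ]; linear_combination (-q) * g2
    have g4 : (3 * σ ^ 2 - 1) / (σ ^ 2 - 3) * c = (3 * σ ^ 2 - 1) * q ^ 2 := by
      rw [← hq2]; field_simp
    have g5 : (q : ℂ) ^ 2 * ((σ : ℂ) ^ 2 - 3) = c := by exact_mod_cast hq2
    rw [hu, g1, g3, g4, Complex.ofReal_exp, mul_assoc, ← Complex.exp_add]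
    congr 2
    push_cast
    rw [← g5]
    linear_combination (-(e * q ^ 3 * s) * (Complex.I + 3 * σ) : ℂ) * Complex.I_sq
  have hpp : 0 < (x - c * t) * (x - c * t) := mul_self_pos.2 hx'
  apply mkdv_aux α β ((A : ℂ) * Complex.exp ((φ : ℂ) * Complex.I))
    (-(e * q) * (σ + Complex.I)) ((e * q ^ 3) * (σ + Complex.I) ^ 3)
  · have hc1 : ContinuousAt (fun s : ℝ => (x - c * t) * (x - c * s)) t := by fun_prop
    filter_upwards [hc1.eventually (lt_mem_nhds hpp)] with s hs using hrep s x hs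
  · have hc1 : ContinuousAt (fun y : ℝ => (x - c * t) * (y - c * t)) x := by fun_prop
    filter_upwards [hc1.eventually (lt_mem_nhds hpp)] with y hy using hrep t y hy
  · simp only [map_mul, map_neg, map_add, Complex.conj_ofReal, Complex.conj_I]
    linear_combination (-(e * q) : ℂ) * hαβ
  · have he2' : (e : ℂ) ^ 2 = 1 := by exact_mod_cast he2
    linear_combination (-(e * q ^ 3) * (σ + Complex.I) ^ 3 : ℂ) * he2'
end

section
/- Let β ∈ ℂ and α = 3β. Then for every smooth function u : ℝ×ℝ → ℂ satisfying the complex mKdV equation u_t + 3β·conj(u)·u·u_x + β·u²·conj(u)_x + u_xxx = 0, the phase-covariant momentum density T = u² and flux X = 2β·u³·conj(u) − u_x² + 2·u·u_xx satisfy the local conservation law ∂_t T + ∂_x X = 0 at every point (t,x) ∈ ℝ×ℝ. -/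
/-- local conservation of the phase-covariant momentum density `T = u²`
with flux `X = 2β·u³·conj(u) − u_x² + 2·u·u_xx`, for `α = 3β`. -/
theorem stmt17 (β : ℂ) (α : ℂ) (hα : α = 3 * β)
    (u : ℝ → ℝ → ℂ) (hu : ContDiff ℝ (⊤ : ℕ∞) (Function.uncurry u))
    (hpde : ∀ t x : ℝ, mkdvLHS α β u t x = 0) :
    ∀ t x : ℝ,
      deriv (fun s => (u s x) ^ 2) t
        + deriv (fun y =>
            2 * β * (u t y) ^ 3 * (starRingEnd ℂ) (u t y)
              - (deriv (u t) y) ^ 2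
              + 2 * u t y * deriv (deriv (u t)) y) x = 0 := by
  intro t x
  have hx : ContDiff ℝ (⊤ : ℕ∞) (u t) :=
    hu.comp (contDiff_const.prodMk contDiff_id : ContDiff ℝ (⊤ : ℕ∞) (fun y : ℝ => (t, y)))
  have ht : ContDiff ℝ (⊤ : ℕ∞) (fun s => u s x) :=
    hu.comp (contDiff_id.prodMk contDiff_const : ContDiff ℝ (⊤ : ℕ∞) (fun s : ℝ => (s, x)))
  have hx1 : ContDiff ℝ (⊤ : ℕ∞) (deriv (u t)) := (contDiff_infty_iff_deriv.mp hx).2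
  have hx2 : ContDiff ℝ (⊤ : ℕ∞) (deriv (deriv (u t))) := (contDiff_infty_iff_deriv.mp hx1).2
  have d0 := ((contDiff_infty_iff_deriv.mp hx).1 x).hasDerivAt
  have d1 := ((contDiff_infty_iff_deriv.mp hx1).1 x).hasDerivAt
  have d2 := ((contDiff_infty_iff_deriv.mp hx2).1 x).hasDerivAt
  have dt := ((contDiff_infty_iff_deriv.mp ht).1 t).hasDerivAt
  have dc : HasDerivAt (fun y => (starRingEnd ℂ) (u t y))
      (deriv (fun y => (starRingEnd ℂ) (u t y)) x) x :=
    (d0.star.differentiableAt : DifferentiableAt ℝ (fun y => star (u t y)) x).hasDerivAt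
  have hp := hpde t x
  unfold mkdvLHS at hp
  have e1 : deriv (fun s => (u s x) ^ 2) t = _ := (dt.fun_pow 2).deriv
  have e2 : deriv (fun y =>
            2 * β * (u t y) ^ 3 * (starRingEnd ℂ) (u t y)
              - (deriv (u t) y) ^ 2
              + 2 * u t y * deriv (deriv (u t)) y) x = _ :=
    (((((d0.fun_pow 3).const_mul (2 * β)).fun_mul dc).fun_sub (d1.fun_pow 2)).fun_add
      ((d0.const_mul 2).fun_mul d2)).deriv
  rw [e1, e2]
  subst hα
  push_cast
  linear_combination (2 * u t x) * hp
end

section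
/- Let α ∈ ℝ and β = 0. Then for every smooth function u : ℝ×ℝ → ℂ satisfying the complex mKdV equation u_t + α·conj(u)·u·u_x + u_xxx = 0, the angular twist density T = i·( u_x·conj(u) − conj(u)_x·u ) and flux X = i·α·( conj(u)²·u·u_x − conj(u)·u²·conj(u)_x ) + i·( conj(u)·u_xxx − u·conj(u)_xxx ) + 2i·( u_x·conj(u)_xx − conj(u)_x·u_xx ) satisfy the local conservation law ∂_t T + ∂_x X = 0 at every point (t,x) ∈ ℝ×ℝ. -/
/-- Pointwise complex conjugate of a function of two real variables. -/
noncomputable def cconj (u : ℝ → ℝ → ℂ) : ℝ → ℝ → ℂ :=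
  fun t x => (starRingEnd ℂ) (u t x)

/-- Equality of mixed partial derivatives, in `deriv` form. -/
theorem mixed_hasDerivAt (u : ℝ → ℝ → ℂ) (hu : ContDiff ℝ (⊤ : ℕ∞) (Function.uncurry u))
    (t x : ℝ) :
    HasDerivAt (fun s => deriv (u s) x) (deriv (fun y => deriv (fun s => u s y) t) x) t := by
  set F := Function.uncurry u with hF
  have hFd : Differentiable ℝ F := hu.differentiable (by simp)
  have hF' : ContDiff ℝ (⊤ : ℕ∞) (fderiv ℝ F) := hu.fderiv_right (by simp)
  have hF'd : Differentiable ℝ (fderiv ℝ F) := hF'.differentiable (by simp)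
  have l1 : ∀ s y : ℝ, HasDerivAt (fun z : ℝ => (s, z)) ((0 : ℝ), (1 : ℝ)) y := fun s y =>
    (hasDerivAt_const y s).prodMk (hasDerivAt_id y)
  have l2 : ∀ s y : ℝ, HasDerivAt (fun z : ℝ => (z, y)) ((1 : ℝ), (0 : ℝ)) s := fun s y =>
    (hasDerivAt_id s).prodMk (hasDerivAt_const s y)
  have e1 : ∀ s y : ℝ, deriv (u s) y = fderiv ℝ F (s, y) (0, 1) := fun s y =>
    ((hFd (s, y)).hasFDerivAt.comp_hasDerivAt y (l1 s y)).deriv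
  have e2 : ∀ s y : ℝ, deriv (fun s => u s y) s = fderiv ℝ F (s, y) (1, 0) := fun s y =>
    (HasFDerivAt.comp_hasDerivAt (f := fun z : ℝ => (z, y)) (l := F) s
      (hFd (s, y)).hasFDerivAt (l2 s y)).deriv
  have h1 : HasDerivAt (fun s => fderiv ℝ F (s, x)) (fderiv ℝ (fderiv ℝ F) (t, x) (1, 0)) t :=
    (hF'd (t, x)).hasFDerivAt.comp_hasDerivAt t (l2 t x)
  have h2 : HasDerivAt (fun y => fderiv ℝ F (t, y)) (fderiv ℝ (fderiv ℝ F) (t, x) (0, 1)) x :=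
    (hF'd (t, x)).hasFDerivAt.comp_hasDerivAt x (l1 t x)
  have h1' := h1.clm_apply (hasDerivAt_const t ((0 : ℝ), (1 : ℝ)))
  have h2' := h2.clm_apply (hasDerivAt_const x ((1 : ℝ), (0 : ℝ)))
  have hs : fderiv ℝ (fderiv ℝ F) (t, x) (1, 0) (0, 1)
      = fderiv ℝ (fderiv ℝ F) (t, x) (0, 1) (1, 0) :=
    second_derivative_symmetric (fun p => (hFd p).hasFDerivAt) (hF'd (t, x)).hasFDerivAt _ _
  simp only [e1, e2]
  rw [h2'.deriv]
  refine h1'.congr_deriv ?_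
  simp only [map_zero, add_zero]
  exact hs

theorem deriv_conj_fun (f : ℝ → ℂ) :
    deriv (fun y => (starRingEnd ℂ) (f y)) = fun y => (starRingEnd ℂ) (deriv f y) := by
  funext y
  exact deriv.star

theorem hasDerivAt_conj_fun {f : ℝ → ℂ} {f' : ℂ} {y : ℝ} (h : HasDerivAt f f' y) :
    HasDerivAt (fun y => (starRingEnd ℂ) (f y)) ((starRingEnd ℂ) f') y :=
  h.star

/-- local conservation of the angular twist density
`T = i(u_x·conj(u) − conj(u)_x·u)` with the stated flux, for `α` real and `β = 0`. -/
theorem stmt18 (α : ℝ)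
    (u : ℝ → ℝ → ℂ) (hu : ContDiff ℝ (⊤ : ℕ∞) (Function.uncurry u))
    (hpde : ∀ t x : ℝ, mkdvLHS (α : ℂ) 0 u t x = 0) :
    ∀ t x : ℝ,
      deriv (fun s : ℝ =>
          Complex.I * (deriv (u s) x * cconj u s x - deriv (cconj u s) x * u s x)) t
        + deriv (fun y : ℝ =>
            Complex.I * (α : ℂ) *
                ((cconj u t y) ^ 2 * u t y * deriv (u t) y
                  - cconj u t y * (u t y) ^ 2 * deriv (cconj u t) y)
              + Complex.I * (cconj u t y * deriv (deriv (deriv (u t))) y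
                  - u t y * deriv (deriv (deriv (cconj u t))) y)
              + 2 * Complex.I * (deriv (u t) y * deriv (deriv (cconj u t)) y
                  - deriv (cconj u t) y * deriv (deriv (u t)) y)) x = 0 := by
  intro t x
  have hut : ContDiff ℝ (⊤ : ℕ∞) (u t) := hu.comp (contDiff_const.prodMk contDiff_id)
  have hus : ContDiff ℝ (⊤ : ℕ∞) (fun s => u s x) := hu.comp (contDiff_id.prodMk contDiff_const)
  have c1 := (contDiff_infty_iff_deriv.1 hut).2
  have c2 := (contDiff_infty_iff_deriv.1 c1).2
  have c3 := (contDiff_infty_iff_deriv.1 c2).2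
  have d0 := (hut.differentiable (by simp) x).hasDerivAt
  have d1 := (c1.differentiable (by simp) x).hasDerivAt
  have d2 := (c2.differentiable (by simp) x).hasDerivAt
  have d3 := (c3.differentiable (by simp) x).hasDerivAt
  have b0 := hasDerivAt_conj_fun d0
  have b1 := hasDerivAt_conj_fun d1
  have b2 := hasDerivAt_conj_fun d2
  have b3 := hasDerivAt_conj_fun d3
  have dt := (hus.differentiable (by simp) t).hasDerivAt
  have dtx := mixed_hasDerivAt u hu t x
  have bt := hasDerivAt_conj_fun dt
  have btx := hasDerivAt_conj_fun dtx
  have ut : ∀ y, deriv (fun s => u s y) t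
      = -((α : ℂ) * ((starRingEnd ℂ) (u t y) * u t y * deriv (u t) y)
        + deriv (deriv (deriv (u t))) y) := by
    intro y
    have := hpde t y
    simp only [mkdvLHS] at this
    linear_combination this
  have utx := ((((b0.mul d0).mul d1).const_mul (α : ℂ)).add d3).neg
  have hutx : deriv (fun y => deriv (fun s => u s y) t) x = _ :=
    (utx.congr_of_eventuallyEq (Filter.Eventually.of_forall ut)).deriv
  have cc : ∀ s, cconj u s = fun y => (starRingEnd ℂ) (u s y) := fun s => rfl
  simp only [cc, deriv_conj_fun]
  have hT := ((dtx.mul bt).sub (btx.mul dt)).const_mul Complex.I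
  have hX := (((((b0.pow 2).mul d0).mul d1).sub ((b0.mul (d0.pow 2)).mul b1)).const_mul
      (Complex.I * (α : ℂ))).add (((b0.mul d3).sub (d0.mul b3)).const_mul Complex.I) |>.add
      (((d1.mul b2).sub (b1.mul d2)).const_mul (2 * Complex.I))
  refine (congrArg₂ (· + ·) hT.deriv hX.deriv).trans ?_
  rw [hutx, ut x]
  simp only [map_neg, map_add, map_mul, Complex.conj_conj, Complex.conj_ofReal, Pi.mul_apply,
    Pi.pow_apply]
  push_cast
  ring
end
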